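/- arXiv:1705.02658 — 4 statements merged into one kernel-verified Lean document; each statement's English description precedes it below -/
import Mathlib

section
/- For every numerical semigroup S of genus g, the weight satisfies W_S ≤ g(g−1)/2, and equality holds if and only if 2 ∈ S. -/
/-- A numerical semigroup: `0 ∈ S`, closed under addition, finite complement. -/
def IsNumericalSemigroup (S : Set ℕ) : Prop :=
  0 ∈ S ∧ (∀ a ∈ S, ∀ b ∈ S, a + b ∈ S) ∧ (Sᶜ : Set ℕ).Finite

/-- The genus: number of gaps. -/
noncomputable def sgGenus (T : Set ℕ) : ℕ := (Tᶜ : Set ℕ).ncard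

/-- The weight `W_T = Σ gaps − binomial(g+1,2)`, as an integer. -/
noncomputable def sgWeight (T : Set ℕ) : ℤ :=
  (∑ᶠ x ∈ (Tᶜ : Set ℕ), (x : ℤ)) - ((sgGenus T + 1).choose 2 : ℤ)

/-- The conductor: least `c` with `n ∈ S` for all `n ≥ c`. -/
noncomputable def sgConductor (S : Set ℕ) : ℕ :=
  sInf {c : ℕ | ∀ n : ℕ, c ≤ n → n ∈ S}

/-- `K(S) = {a ∈ ℕ | c − 1 − a ∉ S}`, the difference computed in `ℤ`,
no negative integer belonging to `S`. -/
def Kset (S : Set ℕ) : Set ℕ :=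
  {a : ℕ | ¬ ∃ s ∈ S, (s : ℤ) = (sgConductor S : ℤ) - 1 - (a : ℤ)}

/-- `S` is symmetric if for all `0 ≤ a ≤ c−1`, `a ∈ S ↔ c−1−a ∉ S`. -/
def IsSymmetricSgp (S : Set ℕ) : Prop :=
  ∀ a : ℕ, a < sgConductor S → (a ∈ S ↔ (sgConductor S - 1 - a) ∉ S)

/-!
List the gaps of `S` increasingly as `ℓ₀ < ⋯ < ℓ_{g-1}`. Since `∑ (i + 1) = binomial(g + 1, 2)`, the
weight is `∑ (ℓᵢ - (i + 1))`, so it suffices to see that `ℓᵢ ≤ 2i + 1` and that equality holds for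
all `i` precisely when `2 ∈ S`.

If `ℓ` is a gap, then `x ↦ ℓ - x` sends elements of `S` in `[0, ℓ]` to gaps in `[0, ℓ]`, so at least
half of `[0, ℓ]` consists of gaps; this is the upper bound. If `2 ∈ S`, then all gaps are odd, which
forces `ℓᵢ ≥ 2i + 1`. If `2 ∉ S`, then `2` is some `ℓᵢ`, and it is not of the form `2i + 1`.
-/

open Finset

theorem finsum_mem_eq_sum_range_nth {M : Type*} [AddCommMonoid M] {p : ℕ → Prop}
    (hp : {x | p x}.Finite) (f : ℕ → M) :
    ∑ᶠ x ∈ {x | p x}, f x = ∑ i ∈ range #hp.toFinset, f (Nat.nth p i) :=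
  calc
    ∑ᶠ x ∈ {x | p x}, f x = ∑ᶠ x ∈ Nat.nth p '' Set.Iio #hp.toFinset, f x := by
      rw [Nat.image_nth_Iio_card]
    _ = ∑ᶠ i ∈ (range #hp.toFinset : Set ℕ), f (Nat.nth p i) := by
      rw [finsum_mem_image (Nat.nth_injOn hp), coe_range]
    _ = ∑ i ∈ range #hp.toFinset, f (Nat.nth p i) := finsum_mem_coe_finset _ _

theorem two_mul_add_one_le_nth_of_odd {p : ℕ → Prop} (hodd : ∀ n, p n → Odd n) {i : ℕ}
    (hi : ∀ hf : {x | p x}.Finite, i < #hf.toFinset) : 2 * i + 1 ≤ Nat.nth p i := by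
  induction i with
  | zero => exact (hodd _ (Nat.nth_mem 0 hi)).pos
  | succ i ih =>
    have hi' : ∀ hf : {x | p x}.Finite, i < #hf.toFinset := fun hf =>
      i.lt_succ_self.trans (hi hf)
    have hlt : Nat.nth p i < Nat.nth p (i + 1) := Nat.nth_lt_nth' i.lt_succ_self hi
    obtain ⟨a, ha⟩ := hodd _ (Nat.nth_mem i hi')
    obtain ⟨b, hb⟩ := hodd _ (Nat.nth_mem (i + 1) hi)
    have := ih hi'
    lia

section AddClosed

variable {S : Set ℕ}

theorem le_two_mul_count_notMem_add_one [DecidablePred (· ∈ S)]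
    (hadd : ∀ a ∈ S, ∀ b ∈ S, a + b ∈ S) {l : ℕ} (hl : l ∉ S) :
    l ≤ 2 * Nat.count (· ∉ S) l + 1 := by
  have hreflect : #{x ∈ range (l + 1) | x ∈ S} ≤ #{x ∈ range (l + 1) | x ∉ S} := by
    refine card_le_card_of_injOn (l - ·) (fun x hx => ?_) (fun x hx y hy hxy => ?_)
    · obtain ⟨hxl, hxS⟩ := mem_filter.mp hx
      have hsum : x + (l - x) = l := Nat.add_sub_cancel' (mem_range_succ_iff.mp hxl)
      exact mem_filter.mpr ⟨mem_range_succ_iff.mpr (Nat.sub_le l x),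
        fun h => hl (hsum ▸ hadd x hxS _ h)⟩
    · have hxl := mem_range_succ_iff.mp (mem_filter.mp hx).1
      have hyl := mem_range_succ_iff.mp (mem_filter.mp hy).1
      exact (tsub_right_inj hxl hyl).mp hxy
  have htotal : #{x ∈ range (l + 1) | x ∈ S} + #{x ∈ range (l + 1) | x ∉ S} = l + 1 := by
    rw [card_filter_add_card_filter_not, card_range]
  have hsucc : #{x ∈ range (l + 1) | x ∉ S} = Nat.count (· ∉ S) l + 1 := by
    rw [← Nat.count_eq_card_filter_range, Nat.count_succ_eq_succ_count_iff.mpr hl]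
  lia

theorem nth_notMem_le_two_mul_add_one (hadd : ∀ a ∈ S, ∀ b ∈ S, a + b ∈ S) {i : ℕ}
    (hi : ∀ hf : {x | x ∉ S}.Finite, i < #hf.toFinset) :
    Nat.nth (· ∉ S) i ≤ 2 * i + 1 := by
  classical
  simpa only [Nat.count_nth hi] using le_two_mul_count_notMem_add_one hadd (Nat.nth_mem i hi)

theorem odd_of_notMem_of_two_mem (h0 : 0 ∈ S) (hadd : ∀ a ∈ S, ∀ b ∈ S, a + b ∈ S)
    (h2 : 2 ∈ S) {n : ℕ} (hn : n ∉ S) : Odd n := by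
  have heven : ∀ k, 2 * k ∈ S := fun k => by
    induction k with
    | zero => exact h0
    | succ k ih => exact hadd _ ih 2 h2
  by_contra hodd
  obtain ⟨k, rfl⟩ := (Nat.not_odd_iff_even.mp hodd).exists_two_nsmul
  exact hn (heven k)

theorem forall_nth_notMem_eq_two_mul_add_one_iff (h0 : 0 ∈ S)
    (hadd : ∀ a ∈ S, ∀ b ∈ S, a + b ∈ S) :
    (∀ i, (∀ hf : {x | x ∉ S}.Finite, i < #hf.toFinset) →
      Nat.nth (· ∉ S) i = 2 * i + 1) ↔ 2 ∈ S := by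
  refine ⟨fun hnth => ?_, fun h2 i hi => le_antisymm (nth_notMem_le_two_mul_add_one hadd hi)
    (two_mul_add_one_le_nth_of_odd (fun _ => odd_of_notMem_of_two_mem h0 hadd h2) hi)⟩
  by_contra h2
  obtain ⟨i, hi, hi2⟩ := Nat.exists_lt_card_nth_eq (p := (· ∉ S)) h2
  have : 2 = 2 * i + 1 := hi2 ▸ hnth i hi
  lia

end AddClosed

theorem sgGenus_eq_card_toFinset {T : Set ℕ} (hT : {x | x ∉ T}.Finite) :
    sgGenus T = #hT.toFinset :=
  Set.ncard_eq_toFinset_card _ hT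

theorem lt_sgGenus_iff {T : Set ℕ} (hT : (Tᶜ : Set ℕ).Finite) {i : ℕ} :
    i < sgGenus T ↔ ∀ hf : {x | x ∉ T}.Finite, i < #hf.toFinset := by
  rw [sgGenus_eq_card_toFinset hT]
  exact ⟨fun hi _ => hi, fun hi => hi hT⟩

theorem sgWeight_eq_sum_nth {T : Set ℕ} (hT : (Tᶜ : Set ℕ).Finite) :
    sgWeight T = ∑ i ∈ range (sgGenus T), ((Nat.nth (· ∉ T) i : ℤ) - (i + 1)) := by
  have hgaps : ∑ᶠ x ∈ (Tᶜ : Set ℕ), (x : ℤ) =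
      ∑ i ∈ range (sgGenus T), (Nat.nth (· ∉ T) i : ℤ) := by
    rw [sgGenus_eq_card_toFinset hT]
    exact finsum_mem_eq_sum_range_nth hT _
  have hchoose : (sgGenus T + 1).choose 2 = ∑ i ∈ range (sgGenus T), (i + 1) := by
    rw [Nat.choose_two_right, ← sum_range_id, sum_range_succ', add_zero]
  rw [sgWeight, hgaps, hchoose, sum_sub_distrib]
  push_cast
  rfl

theorem sum_range_natCast_int (n : ℕ) : ∑ i ∈ range n, (i : ℤ) = (n : ℤ) * ((n : ℤ) - 1) / 2 := by
  have hdouble : (n : ℤ) * ((n : ℤ) - 1) = (∑ i ∈ range n, (i : ℤ)) * 2 := by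
    induction n with
    | zero => simp
    | succ n ih =>
      rw [sum_range_succ, add_mul, ← ih]
      push_cast
      ring
  rw [hdouble, Int.mul_ediv_cancel _ two_ne_zero]

/-- For every numerical semigroup `S` of genus `g`, the weight satisfies
`W_S ≤ g(g−1)/2`, with equality iff `2 ∈ S`. -/
theorem weight_le_max_iff_two_mem (S : Set ℕ) (hS : IsNumericalSemigroup S)
    (g : ℕ) (hg : sgGenus S = g) :
    sgWeight S ≤ (g : ℤ) * ((g : ℤ) - 1) / 2 ∧
      (sgWeight S = (g : ℤ) * ((g : ℤ) - 1) / 2 ↔ 2 ∈ S) := by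
  obtain ⟨h0, hadd, hfin⟩ := hS
  subst hg
  have hle : ∀ i ∈ range (sgGenus S), (Nat.nth (· ∉ S) i : ℤ) - (i + 1) ≤ i := fun i hi => by
    have := nth_notMem_le_two_mul_add_one hadd ((lt_sgGenus_iff hfin).mp (mem_range.mp hi))
    lia
  rw [sgWeight_eq_sum_nth hfin, ← sum_range_natCast_int]
  refine ⟨sum_le_sum hle, ?_⟩
  rw [sum_eq_sum_iff_of_le hle, ← forall_nth_notMem_eq_two_mul_add_one_iff h0 hadd]
  refine forall_congr' fun i => imp_congr (mem_range.trans (lt_sgGenus_iff hfin)) ?_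
  lia
end

section
/- Let S be a numerical semigroup of genus g, let K = K(S), and let g′ = #(ℕ∖K). Then W_K + g′ = W_S + g. -/
/-!
For any cofinite `T`, the number `W_T + #(ℕ ∖ T)` counts the pairs `(a, ℓ)` with `a ∈ T`, `ℓ ∉ T`
and `a < ℓ`: a gap `ℓ` is the larger entry of `ℓ` increasing pairs of naturals, and
`binomial(#(ℕ ∖ T), 2)` of all these pairs consist of two gaps. The reflection `x ↦ c − 1 − x`
exchanges the elements of `S` below `c` with the gaps of `K(S)` and the gaps of `S` with the
elements of `K(S)` below `c`, and it reverses the order, so `S` and `K(S)` have equally many such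
pairs.
-/

open Finset

/-- The pairs consisting of an element of `T` and a larger gap of `T`. Their number is
`W_T + #(ℕ ∖ T)` when `T` is cofinite. -/
def gapPairs (T : Set ℕ) : Set (ℕ × ℕ) :=
  {p | p.1 ∈ T ∧ p.2 ∉ T ∧ p.1 < p.2}

theorem card_biUnion_range_product_singleton (G : Finset ℕ) :
    #(G.biUnion fun l ↦ range l ×ˢ {l}) = ∑ l ∈ G, l := by
  have hdisj : (G : Set ℕ).PairwiseDisjoint fun l ↦ range l ×ˢ {l} := fun l _ m _ hlm ↦
    disjoint_product.mpr (.inr (disjoint_singleton.mpr hlm))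
  rw [card_biUnion hdisj]
  simp only [card_product, card_range, card_singleton, mul_one]

theorem ncard_gapPairs_add_choose_two {T : Set ℕ} {G : Finset ℕ} (hG : Tᶜ = ↑G) :
    (gapPairs T).ncard + (#G).choose 2 = ∑ l ∈ G, l := by
  have mem_gaps (x : ℕ) : x ∈ G ↔ x ∉ T := by rw [← mem_coe, ← hG, Set.mem_compl_iff]
  let pairsBelowGap : Finset (ℕ × ℕ) := G.biUnion fun l ↦ range l ×ˢ {l}
  have mem_pairsBelowGap (p : ℕ × ℕ) : p ∈ pairsBelowGap ↔ p.1 < p.2 ∧ p.2 ∈ G := by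
    simp only [pairsBelowGap, mem_biUnion, mem_product, mem_range, mem_singleton]
    grind
  have hleft_mem : gapPairs T = ↑{p ∈ pairsBelowGap | p.1 ∉ G} := by
    ext p
    simp only [gapPairs, Set.mem_ofPred_eq, coe_filter, mem_pairsBelowGap, mem_gaps]
    tauto
  have hleft_gap : {p ∈ pairsBelowGap | p.1 ∈ G} = {p ∈ G ×ˢ G | p.1 < p.2} := by
    ext p
    simp only [mem_filter, mem_product, mem_pairsBelowGap]
    tauto
  calc (gapPairs T).ncard + (#G).choose 2
      = #{p ∈ pairsBelowGap | p.1 ∉ G} + #{p ∈ pairsBelowGap | p.1 ∈ G} := by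
        rw [hleft_mem, Set.ncard_coe_finset, hleft_gap, card_product_filter_lt]
    _ = #pairsBelowGap := by rw [add_comm, card_filter_add_card_filter_not]
    _ = ∑ l ∈ G, l := card_biUnion_range_product_singleton G

theorem sgWeight_add_sgGenus {T : Set ℕ} (hT : Tᶜ.Finite) :
    sgWeight T + sgGenus T = (gapPairs T).ncard := by
  have hG : Tᶜ = ↑hT.toFinset := hT.coe_toFinset.symm
  have hgenus : sgGenus T = #hT.toFinset := Set.ncard_eq_toFinset_card _ hT
  have hsum : ∑ᶠ x ∈ Tᶜ, (x : ℤ) = (gapPairs T).ncard + (sgGenus T).choose 2 := by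
    rw [hgenus, finsum_mem_eq_finite_toFinset_sum _ hT]
    simpa using congrArg (Nat.cast (R := ℤ)) (ncard_gapPairs_add_choose_two hG).symm
  rw [sgWeight, hsum, Nat.choose_succ_succ', Nat.choose_one_right]
  push_cast
  ring

theorem lt_sgConductor_of_notMem {S : Set ℕ} (hS : Sᶜ.Finite) {n : ℕ} (hn : n ∉ S) :
    n < sgConductor S := by
  obtain ⟨b, hb⟩ := hS.bddAbove
  have hne : {c : ℕ | ∀ n, c ≤ n → n ∈ S}.Nonempty :=
    ⟨b + 1, fun m hm ↦ by_contra fun hmS ↦ (hb hmS).not_gt hm⟩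
  exact not_le.mp fun hle ↦ hn (Nat.sInf_mem hne n hle)

theorem lt_sgConductor_of_notMem_Kset {S : Set ℕ} {a : ℕ} (ha : a ∉ Kset S) :
    a < sgConductor S := by
  obtain ⟨s, -, hs⟩ := not_not.mp ha
  omega

theorem mem_Kset_iff_of_lt {S : Set ℕ} {a : ℕ} (ha : a < sgConductor S) :
    a ∈ Kset S ↔ sgConductor S - 1 - a ∉ S := by
  have hcast (s : ℕ) : (s : ℤ) = sgConductor S - 1 - a ↔ s = sgConductor S - 1 - a := by omega
  simp only [Kset, Set.mem_ofPred_eq, hcast, exists_eq_right]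

theorem finite_compl_Kset (S : Set ℕ) : (Kset S)ᶜ.Finite :=
  (Set.finite_lt_nat (sgConductor S)).subset fun _ ↦ lt_sgConductor_of_notMem_Kset

/-- The reflection `x ↦ c - 1 - x` of both entries of a pair, which are swapped so that an
increasing pair of numbers below `c` stays increasing. The subtraction is truncated. -/
def reflectPair (c : ℕ) (p : ℕ × ℕ) : ℕ × ℕ :=
  (c - 1 - p.2, c - 1 - p.1)

section Reflection

variable {S T : Set ℕ} {c : ℕ}

theorem reflectPair_reflectPair {p : ℕ × ℕ} (h₁ : p.1 < c) (h₂ : p.2 < c) :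
    reflectPair c (reflectPair c p) = p := by
  ext <;> simp only [reflectPair] <;> omega

theorem leftInvOn_reflectPair_gapPairs (hS : ∀ l ∉ S, l < c) :
    Set.LeftInvOn (reflectPair c) (reflectPair c) (gapPairs S) :=
  fun _ ⟨_, hl, hal⟩ ↦ reflectPair_reflectPair (hal.trans (hS _ hl)) (hS _ hl)

theorem mapsTo_reflectPair_gapPairs (hS : ∀ l ∉ S, l < c)
    (hST : ∀ a < c, c - 1 - a ∈ T ↔ a ∉ S) :
    Set.MapsTo (reflectPair c) (gapPairs S) (gapPairs T) := by
  rintro ⟨a, l⟩ ⟨ha, hl, hal : a < l⟩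
  have hlc : l < c := hS l hl
  refine ⟨(hST l hlc).mpr hl, fun h ↦ (hST a (hal.trans hlc)).mp h ha, ?_⟩
  change c - 1 - l < c - 1 - a
  omega

theorem ncard_gapPairs_eq_of_reflect (hS : ∀ l ∉ S, l < c) (hT : ∀ l ∉ T, l < c)
    (hTS : ∀ a < c, a ∈ T ↔ c - 1 - a ∉ S) : (gapPairs S).ncard = (gapPairs T).ncard := by
  have hST : ∀ a < c, c - 1 - a ∈ T ↔ a ∉ S := fun a ha ↦ by
    rw [hTS _ (by omega), show c - 1 - (c - 1 - a) = a by omega]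
  have hinv : Set.InvOn (reflectPair c) (reflectPair c) (gapPairs S) (gapPairs T) :=
    ⟨leftInvOn_reflectPair_gapPairs hS, leftInvOn_reflectPair_gapPairs hT⟩
  exact (hinv.bijOn (mapsTo_reflectPair_gapPairs hS hST)
    (mapsTo_reflectPair_gapPairs hT fun a ha ↦ by rw [hTS a ha, not_not])).ncard_eq

end Reflection

theorem weight_Kset_add_genus_general {S : Set ℕ} (hS : Sᶜ.Finite) :
    sgWeight (Kset S) + sgGenus (Kset S) = sgWeight S + sgGenus S := by
  have hpairs : (gapPairs S).ncard = (gapPairs (Kset S)).ncard :=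
    ncard_gapPairs_eq_of_reflect (fun _ ↦ lt_sgConductor_of_notMem hS)
      (fun _ ↦ lt_sgConductor_of_notMem_Kset) fun _ ↦ mem_Kset_iff_of_lt
  rw [sgWeight_add_sgGenus (finite_compl_Kset S), sgWeight_add_sgGenus hS, hpairs]

/-- `W_K + g′ = W_S + g`. -/
theorem weight_Kset_add_genus (S : Set ℕ) (hS : IsNumericalSemigroup S)
    (g g' : ℕ) (hg : sgGenus S = g) (hg' : ((Kset S)ᶜ : Set ℕ).ncard = g') :
    sgWeight (Kset S) + (g' : ℤ) = sgWeight S + (g : ℤ) := by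
  subst hg hg'
  exact weight_Kset_add_genus_general hS.2.2
end

section
/- Let S be a numerical semigroup of genus g ≥ 11 with 2 ∉ S, and let K = K(S). Then W_K ≤ (g² − 5g + 10)/2; moreover, if S is not bielliptic (i.e., it is not the case that 4 ∈ S, 6 ∈ S and 1, 2, 3, 5 ∉ S), then W_K < (g² − 5g + 10)/2. -/
/-!
Let `F` be the largest gap of `S`. The gaps of `K = Kset S` are the `F - s` with `s ∈ S`, `s < F`,
so `W_K` counts the pairs `(s, x)` with `s ∈ S`, `s < x` and `x ≠ F` a gap. For such an `x`, the
reflection `s ↦ x - s` maps the elements of `S` below `x` to gaps, and misses exactly the gaps `a`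
for which `x - a` is a gap too. Hence `W_K + P = g.choose 2`, where `P` is the number of ordered
pairs of gaps whose sum is a gap other than `F`, and the bound becomes `2 * g ≤ P + 5`.

The gap `2 = 1 + 1` has one pair, and apart from few exceptions each of the `g - 3` gaps other than
`1`, `2` and `F` has at least two. The exceptions are controlled by the multiplicity `m`, the least
positive element of `S`. If `4 ≤ m`, the only possible one is `2 * m - 2`, and then
`m, …, 2 * m - 3` all lie in `S`. If `m = 3`, the gaps are `1, 4, …, 3 * p - 2` and
`2, 5, …, 3 * q - 1`, and only `4` and `F - 3` can be exceptions. Gaps with more than two pairs make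
up for the exceptions, and give one more pair than needed unless `S` is bielliptic.
-/

section

open Finset

variable {S : Set ℕ}

namespace IsNumericalSemigroup

theorem zero_mem (hS : IsNumericalSemigroup S) : 0 ∈ S := hS.1

theorem add_mem (hS : IsNumericalSemigroup S) {a b : ℕ} (ha : a ∈ S) (hb : b ∈ S) : a + b ∈ S :=
  hS.2.1 a ha b hb

theorem Ici_subset_of_Ico_subset (hS : IsNumericalSemigroup S) {m k : ℕ} (hm : 0 < m)
    (hmS : m ∈ S) (hk : Set.Ico k (k + m) ⊆ S) : Set.Ici k ⊆ S := by
  intro x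
  induction x using Nat.strong_induction_on with
  | _ x ih =>
    intro hx
    rw [Set.mem_Ici] at hx
    rcases lt_or_ge x (k + m) with hlt | hge
    · exact hk ⟨hx, hlt⟩
    · have hsub : x - m ∈ S := ih (x - m) (by omega) (Set.mem_Ici.2 (by omega))
      simpa [show x - m + m = x by omega] using hS.add_mem hsub hmS

theorem exists_isGreatest_compl (hS : IsNumericalSemigroup S) (hne : Sᶜ.Nonempty) :
    ∃ F, IsGreatest Sᶜ F :=
  hS.2.2.bddAbove.exists_isGreatest_of_nonempty hne

theorem exists_isLeast_pos (hS : IsNumericalSemigroup S) : ∃ m, IsLeast (S \ {0}) m := by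
  have hinf : S.Infinite := by simpa only [compl_compl] using hS.2.2.infinite_compl
  exact ⟨_, isLeast_csInf (hinf.sdiff (Set.finite_singleton 0)).nonempty⟩

end IsNumericalSemigroup

open Classical in
/-- The gaps of `S` smaller than `n`, as a finite set. -/
noncomputable def gapsBelow (S : Set ℕ) (n : ℕ) : Finset ℕ := {x ∈ range n | x ∉ S}

open Classical in
/-- The number of ordered pairs of gaps of `S` with sum `x`, each pair being recorded by its first
entry. -/
noncomputable def gapSumCount (S : Set ℕ) (x : ℕ) : ℕ :=
  #{a ∈ range (x + 1) | a ∉ S ∧ x - a ∉ S}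

theorem mem_gapsBelow {n x : ℕ} : x ∈ gapsBelow S n ↔ x < n ∧ x ∉ S := by
  simp [gapsBelow]

theorem compl_eq_gapsBelow {n : ℕ} (hn : Set.Ici n ⊆ S) : Sᶜ = ↑(gapsBelow S n) := by
  ext x
  simp only [Set.mem_compl_iff, mem_coe, mem_gapsBelow, iff_and_self]
  exact fun hx => not_le.1 fun hnx => hx (hn hnx)

theorem Ici_succ_subset_of_isGreatest_compl {F : ℕ} (hF : IsGreatest Sᶜ F) :
    Set.Ici (F + 1) ⊆ S := by
  intro x hx
  by_contra hxS
  exact absurd (hF.2 hxS) (not_le.2 hx)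

theorem sgConductor_eq_succ {F : ℕ} (hF : IsGreatest Sᶜ F) : sgConductor S = F + 1 := by
  refine IsLeast.csInf_eq ⟨fun n hn => Ici_succ_subset_of_isGreatest_compl hF hn, fun c hc => ?_⟩
  by_contra hcF
  exact hF.1 (hc F (by omega))

theorem card_gapsBelow_add_one {F : ℕ} (hF : IsGreatest Sᶜ F) :
    #(gapsBelow S F) + 1 = sgGenus S := by
  have hgaps : gapsBelow S (F + 1) = insert F (gapsBelow S F) := by
    rw [gapsBelow, range_add_one, filter_insert, if_pos (show F ∉ S from hF.1), gapsBelow]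
  rw [sgGenus, compl_eq_gapsBelow (Ici_succ_subset_of_isGreatest_compl hF), Set.ncard_coe_finset,
    hgaps, card_insert_of_notMem (by simp [mem_gapsBelow])]

theorem sum_card_filter_lt_eq_choose_two {α : Type*} [LinearOrder α] (G : Finset α) :
    ∑ x ∈ G, #{y ∈ G | y < x} = (#G).choose 2 := by
  induction G using Finset.induction_on_max with
  | empty => simp
  | insert a s hlt ih =>
    have ha : a ∉ s := fun h => lt_irrefl _ (hlt a h)
    have htop : #{y ∈ insert a s | y < a} = #s := by
      rw [filter_insert, if_neg (lt_irrefl a), filter_true_of_mem hlt]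
    have hrest : ∀ x ∈ s, #{y ∈ insert a s | y < x} = #{y ∈ s | y < x} := fun x hx => by
      rw [filter_insert, if_neg (hlt x hx).not_gt]
    rw [sum_insert ha, htop, sum_congr rfl hrest, ih, card_insert_of_notMem ha,
      Nat.choose_succ_succ', Nat.choose_one_right]

open Classical in
theorem sgWeight_add_card {T : Set ℕ} {G : Finset ℕ} (hG : Tᶜ = ↑G) :
    sgWeight T + #G = ((∑ x ∈ G, #{t ∈ range x | t ∈ T} : ℕ) : ℤ) := by
  have hgenus : sgGenus T = #G := by rw [sgGenus, hG, Set.ncard_coe_finset]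
  have hmem : ∀ y, y ∈ G ↔ y ∉ T := fun y => by rw [← mem_coe, ← hG, Set.mem_compl_iff]
  have hsplit : ∀ x ∈ G, x = #{t ∈ range x | t ∈ T} + #{y ∈ G | y < x} := by
    intro x _
    have hbelow : {y ∈ G | y < x} = {y ∈ range x | y ∉ T} := by
      ext y
      simp only [mem_filter, mem_range, hmem, and_comm]
    rw [hbelow, card_filter_add_card_filter_not, card_range]
  have hsum : ∑ x ∈ G, x = ∑ x ∈ G, #{t ∈ range x | t ∈ T} + (#G).choose 2 := by
    rw [← sum_card_filter_lt_eq_choose_two, ← sum_add_distrib]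
    exact sum_congr rfl hsplit
  rw [sgWeight, hgenus, hG, finsum_mem_coe_finset, ← Nat.cast_sum, hsum, Nat.choose_succ_succ',
    Nat.choose_one_right]
  push_cast
  ring

theorem mem_Kset_iff {F a : ℕ} (hF : IsGreatest Sᶜ F) (ha : a ≤ F) : a ∈ Kset S ↔ F - a ∉ S := by
  rw [Kset, Set.mem_ofPred_eq, sgConductor_eq_succ hF, not_iff_not]
  constructor
  · rintro ⟨s, hs, h⟩
    rwa [show F - a = s by omega]
  · exact fun h => ⟨F - a, h, by omega⟩

open Classical in
theorem compl_Kset_eq_image {F : ℕ} (hF : IsGreatest Sᶜ F) :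
    (Kset S)ᶜ = ↑({s ∈ range F | s ∈ S}.image (F - ·)) := by
  ext a
  simp only [Set.mem_compl_iff, coe_image, coe_filter, mem_range, Set.mem_image, Set.mem_ofPred_eq]
  constructor
  · intro ha
    have haF : a ≤ F := by
      by_contra hFa
      refine ha fun ⟨s, _, h⟩ => ?_
      rw [sgConductor_eq_succ hF] at h
      omega
    rw [mem_Kset_iff hF haF, not_not] at ha
    have hne : F - a ≠ F := fun h => hF.1 (h ▸ ha)
    exact ⟨F - a, ⟨by omega, ha⟩, by omega⟩
  · rintro ⟨s, ⟨hsF, hs⟩, rfl⟩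
    rw [mem_Kset_iff hF (Nat.sub_le F s), not_not, Nat.sub_sub_self hsF.le]
    exact hs

theorem card_filter_range_sub (p : ℕ → Prop) [DecidablePred p] (n : ℕ) :
    #{a ∈ range (n + 1) | p (n - a)} = #{a ∈ range (n + 1) | p a} := by
  simpa only [card_filter, Nat.add_sub_cancel] using
    sum_range_reflect (fun a => if p a then 1 else 0) (n + 1)

open Classical in
theorem card_mem_Kset_below {F s : ℕ} (hF : IsGreatest Sᶜ F) (hs : s < F) :
    #{t ∈ range (F - s) | t ∈ Kset S} = #{b ∈ gapsBelow S F | s < b} + 1 := by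
  have hK : {t ∈ range (F - s) | t ∈ Kset S} =
      {t ∈ range (F + 1) | s < F - t ∧ F - t ∉ S} := by
    ext t
    simp only [mem_filter, mem_range]
    grind [mem_Kset_iff]
  have hgaps : {b ∈ range (F + 1) | s < b ∧ b ∉ S} = insert F {b ∈ gapsBelow S F | s < b} := by
    ext b
    have hFS : F ∉ S := hF.1
    simp only [mem_filter, mem_range, mem_insert, mem_gapsBelow]
    grind
  rw [hK, card_filter_range_sub (fun b => s < b ∧ b ∉ S), hgaps,
    card_insert_of_notMem (by simp [mem_gapsBelow])]

open Classical in
theorem sgWeight_Kset {F : ℕ} (hF : IsGreatest Sᶜ F) :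
    sgWeight (Kset S) = ((∑ x ∈ gapsBelow S F, #{s ∈ range x | s ∈ S} : ℕ) : ℤ) := by
  have hinj : Set.InjOn (F - ·) ({s ∈ range F | s ∈ S} : Finset ℕ) := by
    intro a ha b hb hab
    simp only [coe_filter, mem_range, Set.mem_ofPred_eq] at ha hb hab
    omega
  have hweight := sgWeight_add_card (compl_Kset_eq_image hF)
  have hcount : ∑ s ∈ range F with s ∈ S, #{b ∈ gapsBelow S F | s < b} =
      ∑ x ∈ gapsBelow S F, #{s ∈ range x | s ∈ S} := by
    refine (sum_card_bipartiteAbove_eq_sum_card_bipartiteBelow (· < ·)).trans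
      (sum_congr rfl fun x hx => congrArg card ?_)
    ext s
    have := (mem_gapsBelow.1 hx).1
    simp only [bipartiteBelow, mem_filter, mem_range]
    grind
  rw [card_image_of_injOn hinj, sum_image hinj, sum_congr rfl fun s hs =>
    card_mem_Kset_below hF (mem_range.1 (mem_filter.1 hs).1), sum_add_distrib, hcount,
    sum_const, smul_eq_mul, mul_one, Nat.cast_add] at hweight
  exact add_right_cancel hweight

open Classical in
theorem card_mem_below_add_gapSumCount (hS : IsNumericalSemigroup S) {x : ℕ} (hx : x ∉ S) :
    #{s ∈ range x | s ∈ S} + gapSumCount S x = #(gapsBelow S x) + 1 := by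
  have hgaps : #{a ∈ range (x + 1) | a ∉ S} = #(gapsBelow S x) + 1 := by
    rw [range_add_one, filter_insert, if_pos hx, card_insert_of_notMem (by simp), gapsBelow]
  have hgap_of_sub : ∀ a, a < x + 1 → x - a ∈ S → a ∉ S := by
    intro a hax hsub ha
    have hadd := hS.add_mem hsub ha
    rw [Nat.sub_add_cancel (by omega)] at hadd
    exact hx hadd
  have hreflect : #{s ∈ range x | s ∈ S} = #{a ∈ range (x + 1) | a ∉ S ∧ ¬ x - a ∉ S} := by
    have hsub : {a ∈ range (x + 1) | a ∉ S ∧ ¬ x - a ∉ S} = {a ∈ range (x + 1) | x - a ∈ S} :=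
      filter_congr fun a ha => by
        rw [not_not, and_iff_right_iff_imp]
        exact hgap_of_sub a (mem_range.1 ha)
    rw [hsub, card_filter_range_sub (· ∈ S), range_add_one, filter_insert, if_neg hx]
  rw [hreflect, gapSumCount, ← filter_filter, ← filter_filter, add_comm,
    card_filter_add_card_filter_not, hgaps]

theorem sgWeight_Kset_add_sum_gapSumCount (hS : IsNumericalSemigroup S) {F : ℕ}
    (hF : IsGreatest Sᶜ F) :
    sgWeight (Kset S) + ((∑ x ∈ gapsBelow S F, gapSumCount S x : ℕ) : ℤ) =
      (sgGenus S).choose 2 := by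
  classical
  have hrank : ∀ x ∈ gapsBelow S F, #{s ∈ range x | s ∈ S} + gapSumCount S x =
      #{y ∈ gapsBelow S F | y < x} + 1 := by
    intro x hx
    rw [mem_gapsBelow] at hx
    rw [card_mem_below_add_gapSumCount hS hx.2]
    congr 2
    ext y
    simp only [mem_gapsBelow, mem_filter]
    grind
  rw [sgWeight_Kset hF, ← Nat.cast_add, ← sum_add_distrib, sum_congr rfl hrank, sum_add_distrib,
    sum_card_filter_lt_eq_choose_two, ← card_gapsBelow_add_one hF, Nat.choose_succ_succ',
    Nat.choose_one_right, sum_const, smul_eq_mul, mul_one, add_comm]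

open Classical in
theorem card_le_gapSumCount {x : ℕ} {A : Finset ℕ} (hA : ∀ a ∈ A, a ≤ x ∧ a ∉ S ∧ x - a ∉ S) :
    #A ≤ gapSumCount S x := by
  refine card_le_card fun a ha => mem_filter.2 ⟨?_, (hA a ha).2⟩
  exact mem_range.2 (Nat.lt_succ_of_le (hA a ha).1)

theorem one_le_gapSumCount_add {a b : ℕ} (ha : a ∉ S) (hb : b ∉ S) :
    1 ≤ gapSumCount S (a + b) := by
  simpa using card_le_gapSumCount (A := {a}) (by simp [ha, hb])

theorem two_le_gapSumCount_add {a b : ℕ} (ha : a ∉ S) (hb : b ∉ S) (hab : a ≠ b) :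
    2 ≤ gapSumCount S (a + b) := by
  simpa [hab] using card_le_gapSumCount (A := {a, b}) (by simp [ha, hb])

theorem sub_one_le_gapSumCount {n : ℕ} (hn : ∀ i, 0 < i → i < n → i ∉ S) :
    n - 1 ≤ gapSumCount S n := by
  simpa using card_le_gapSumCount (A := Ioo 0 n) fun a ha => by
    rw [mem_Ioo] at ha
    exact ⟨ha.2.le, hn a ha.1 ha.2, hn _ (by omega) (by omega)⟩

theorem mul_card_add_sum_le {α : Type*} {A B : Finset α} {f : α → ℕ} {k : ℕ}
    (hBA : B ⊆ A) (hf : ∀ x ∈ A, x ∉ B → k ≤ f x) :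
    k * #A + ∑ x ∈ B, f x ≤ ∑ x ∈ A, f x + k * #B := by
  classical
  have hrest : #(A \ B) • k ≤ ∑ x ∈ A \ B, f x :=
    card_nsmul_le_sum _ _ _ fun x hx => hf x (mem_sdiff.1 hx).1 (mem_sdiff.1 hx).2
  have hcard := card_sdiff_add_card_eq_card hBA
  have hsum := sum_sdiff (f := f) hBA
  rw [smul_eq_mul] at hrest
  nlinarith

theorem sgGenus_le_card {A : Finset ℕ} (hA : ∀ x ∉ S, x ∈ A) : sgGenus S ≤ #A := by
  rw [sgGenus, ← Set.ncard_coe_finset]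
  exact Set.ncard_le_ncard hA A.finite_toSet

theorem sgGenus_le_of_Ici_subset (hS : IsNumericalSemigroup S) {n : ℕ}
    (hn : Set.Ici (n + 1) ⊆ S) : sgGenus S ≤ n := by
  refine (sgGenus_le_card (A := Icc 1 n) fun x hx => ?_).trans_eq (by simp)
  have hx0 : x ≠ 0 := fun h => hx (h ▸ hS.zero_mem)
  have hxn : ¬ n + 1 ≤ x := fun h => hx (hn h)
  exact mem_Icc.2 ⟨by omega, by omega⟩

theorem notMem_of_lt_multiplicity {m i : ℕ} (hm : IsLeast (S \ {0}) m) (hi : 0 < i)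
    (him : i < m) : i ∉ S :=
  fun hiS => him.not_ge (hm.2 ⟨hiS, hi.ne'⟩)

theorem eq_of_gapSumCount_lt_two {l a b : ℕ} (hl : gapSumCount S l < 2) (hab : a + b = l)
    (ha : a ∉ S) (hb : b ∉ S) : a = b := by
  by_contra hne
  exact hl.not_ge (hab ▸ two_le_gapSumCount_add ha hb hne)

theorem sub_mem_of_gapSumCount_lt_two {m l i : ℕ} (hm : IsLeast (S \ {0}) m)
    (hl : gapSumCount S l < 2) (hml : 2 * m ≤ l + 1) (hi : 0 < i) (him : i < m) : l - i ∈ S := by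
  by_contra hli
  have := eq_of_gapSumCount_lt_two hl (by omega) (notMem_of_lt_multiplicity hm hi him) hli
  omega

theorem add_multiplicity_notMem (hS : IsNumericalSemigroup S) {m l F : ℕ}
    (hm : IsLeast (S \ {0}) m) (hl : gapSumCount S l < 2) (hml : 2 * m ≤ l + 1) (hF : F ∉ S)
    (hlF : l < F) : l + m ∉ S := by
  intro hlm
  have hm0 : 0 < m := Nat.pos_of_ne_zero hm.1.2
  refine hF (hS.Ici_subset_of_Ico_subset (k := l + 1) hm0 hm.1.1 ?_ hlF)
  rintro x ⟨hlx, hxm⟩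
  rcases (Nat.lt_succ_iff.1 (by omega : x < l + m + 1)).eq_or_lt with rfl | hlt
  · exact hlm
  · have hsub := sub_mem_of_gapSumCount_lt_two hm hl hml
      (by omega : 0 < l + m - x) (by omega)
    simpa [show l - (l + m - x) + m = x by omega] using hS.add_mem hsub hm.1.1

/-- Lowering `x ∈ S` by `m` stays in `S` until zero is reached, except at a step where `x - m` and
`l + m - x` are both gaps: their sum is `l`, so they are equal and `x = l / 2 + m`. -/
theorem modEq_zero_or_half (hS : IsNumericalSemigroup S) {m l : ℕ}
    (hm : IsLeast (S \ {0}) m) (hl : gapSumCount S l < 2) (hlm : l + m ∉ S) {x : ℕ}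
    (hx : x ∈ S) (hxl : x ≤ l) : x ≡ 0 [MOD m] ∨ x ≡ l / 2 [MOD m] := by
  induction x using Nat.strong_induction_on with
  | _ x ih =>
    rcases Nat.eq_zero_or_pos x with rfl | hx0
    · exact Or.inl rfl
    have hmx : m ≤ x := hm.2 ⟨hx, hx0.ne'⟩
    have hm0 : 0 < m := Nat.pos_of_ne_zero hm.1.2
    have hstep : x - m ≡ x [MOD m] := (Nat.modEq_iff_dvd' (Nat.sub_le x m)).2 ⟨1, by omega⟩
    by_cases hsub : x - m ∈ S
    · exact (ih (x - m) (by omega) hsub (by omega)).imp hstep.symm.trans hstep.symm.trans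
    · have hgap : l + m - x ∉ S := fun h => hlm <| by
        simpa [show x + (l + m - x) = l + m by omega] using hS.add_mem hx h
      have heq := eq_of_gapSumCount_lt_two hl (by omega) hsub hgap
      right
      rw [show l / 2 = x - m by omega]
      exact hstep.symm

theorem two_le_gapSumCount_of_two_mul_le (hS : IsNumericalSemigroup S) {m l F : ℕ}
    (hm : IsLeast (S \ {0}) m) (hm4 : 4 ≤ m) (hml : 2 * m ≤ l + 1) (hF : F ∉ S) (hlF : l < F) :
    2 ≤ gapSumCount S l := by
  by_contra! hl
  have hclass : ∀ i, 0 < i → i < 4 → l - i ≡ 0 [MOD m] ∨ l - i ≡ l / 2 [MOD m] := fun i hi hi4 =>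
    modEq_zero_or_half hS hm hl (add_multiplicity_notMem hS hm hl hml hF hlF)
      (sub_mem_of_gapSumCount_lt_two hm hl hml hi (by omega)) (Nat.sub_le l i)
  have hincong : ∀ i j, i < j → j < 4 → ¬ l - j ≡ l - i [MOD m] := by
    intro i j hij hj h
    have := Nat.le_of_dvd (by omega) ((Nat.modEq_iff_dvd' (by omega)).1 h)
    omega
  have h12 := hincong 1 2 (by omega) (by omega)
  have h13 := hincong 1 3 (by omega) (by omega)
  have h23 := hincong 2 3 (by omega) (by omega)
  rcases hclass 1 (by omega) (by omega) with h1 | h1 <;>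
    rcases hclass 2 (by omega) (by omega) with h2 | h2 <;>
    rcases hclass 3 (by omega) (by omega) with h3 | h3 <;>
    first
    | exact h12 (h2.trans h1.symm)
    | exact h13 (h3.trans h1.symm)
    | exact h23 (h3.trans h2.symm)

theorem two_le_gapSumCount_or (hS : IsNumericalSemigroup S) {m l F : ℕ}
    (hm : IsLeast (S \ {0}) m) (hm4 : 4 ≤ m) (hl3 : 3 ≤ l) (hF : F ∉ S)
    (hlF : l < F) : 2 ≤ gapSumCount S l ∨ (l + 2 = 2 * m ∧ Set.Ico m l ⊆ S) := by
  have hgap : ∀ i, 0 < i → i < m → i ∉ S := fun i => notMem_of_lt_multiplicity hm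
  have hadd : ∀ a, a ≤ l → a ∉ S → l - a ∉ S → a ≠ l - a → 2 ≤ gapSumCount S l :=
    fun a hal ha hla hne => by
      simpa [Nat.add_sub_cancel' hal] using two_le_gapSumCount_add ha hla hne
  rcases lt_or_ge l m with hlt | hge
  · exact Or.inl <| hadd 1 (by omega) (hgap 1 (by omega) (by omega))
      (hgap _ (by omega) (by omega)) (by omega)
  rcases lt_trichotomy (l + 2) (2 * m) with hlt | heq | hgt
  · exact Or.inl <| hadd (m - 1) (by omega) (hgap _ (by omega) (by omega))
      (hgap _ (by omega) (by omega)) (by omega)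
  · refine or_iff_not_imp_left.2 fun hl => ⟨heq, fun i hi => ?_⟩
    by_contra hiS
    have hil := Set.mem_Ico.1 hi
    exact hl <| hadd i hil.2.le hiS (hgap _ (by omega) (by omega)) (by omega)
  · exact Or.inl <| two_le_gapSumCount_of_two_mul_le hS hm hm4 (by omega) hF hlF

theorem Ici_two_mul_subset (hS : IsNumericalSemigroup S) {m : ℕ} (hm5 : 5 ≤ m)
    (hm : Set.Ico m (2 * m - 2) ⊆ S) : Set.Ici (2 * m) ⊆ S := by
  refine hS.Ici_subset_of_Ico_subset (by omega : 0 < m) (hm ⟨le_rfl, by omega⟩) ?_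
  rintro x ⟨hmx, hxm⟩
  have hhalf : x / 2 ∈ S := hm ⟨by omega, by omega⟩
  have hhalf' : x - x / 2 ∈ S := hm ⟨by omega, by omega⟩
  simpa [show x / 2 + (x - x / 2) = x by omega] using hS.add_mem hhalf hhalf'

theorem sgGenus_le_of_isGreatest_compl (hS : IsNumericalSemigroup S) {F : ℕ}
    (hF : IsGreatest Sᶜ F) : sgGenus S ≤ F :=
  sgGenus_le_of_Ici_subset hS (Ici_succ_subset_of_isGreatest_compl hF)

theorem five_notMem_of_four_mem (hS : IsNumericalSemigroup S) (hg : 11 ≤ sgGenus S)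
    (h4 : 4 ∈ S) : 5 ∉ S := by
  intro h5
  have h8 := hS.add_mem h4 h4
  have h9 := hS.add_mem h4 h5
  have h10 := hS.add_mem h5 h5
  have hlarge : Set.Ici 12 ⊆ S := hS.Ici_subset_of_Ico_subset (by omega) h4 fun x hx => by
    obtain ⟨hx12, hx16⟩ := hx
    interval_cases x
    exacts [hS.add_mem h4 h8, hS.add_mem h4 h9, hS.add_mem h4 h10, hS.add_mem h5 h10]
  have hle : sgGenus S ≤ #((Icc 1 11).erase 4) := sgGenus_le_card fun x hx => by
    have hx0 : x ≠ 0 := fun h => hx (h ▸ hS.zero_mem)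
    have hx12 : ¬ 12 ≤ x := fun h => hx (hlarge h)
    exact mem_erase.2 ⟨fun h => hx (h ▸ h4), mem_Icc.2 ⟨by omega, by omega⟩⟩
  rw [card_erase_of_mem (by simp), Nat.card_Icc] at hle
  omega

theorem two_le_gapSumCount_of_multiplicity_four (hS : IsNumericalSemigroup S)
    (hm : IsLeast (S \ {0}) 4) (h5 : 5 ∉ S) {x F : ℕ} (hx3 : 3 ≤ x) (hF : F ∉ S)
    (hxF : x < F) : 2 ≤ gapSumCount S x := by
  refine (two_le_gapSumCount_or hS hm le_rfl hx3 hF hxF).resolve_right fun ⟨_, hIco⟩ => ?_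
  exact h5 (hIco ⟨by omega, by omega⟩)

theorem one_notMem_of_two_notMem (hS : IsNumericalSemigroup S) (h2 : 2 ∉ S) : 1 ∉ S :=
  fun h1 => h2 (hS.add_mem h1 h1)

theorem two_mul_sgGenus_add_sum_le (hS : IsNumericalSemigroup S) (h2 : 2 ∉ S) {F : ℕ}
    (hF : IsGreatest Sᶜ F) (hF2 : 2 < F) {B : Finset ℕ} (hB : ∀ x ∈ B, 3 ≤ x ∧ x < F ∧ x ∉ S)
    (hcount : ∀ x < F, x ∉ S → 3 ≤ x → x ∉ B → 2 ≤ gapSumCount S x) :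
    2 * sgGenus S + ∑ x ∈ B, gapSumCount S x ≤
      ∑ x ∈ gapsBelow S F, gapSumCount S x + 2 * #B + 5 := by
  have h1 := one_notMem_of_two_notMem hS h2
  have hdisj : Disjoint {1, 2} B := by
    rw [disjoint_left]
    intro x hx hxB
    have := (hB x hxB).1
    simp only [mem_insert, mem_singleton] at hx
    omega
  have hsub : {1, 2} ∪ B ⊆ gapsBelow S F := by
    intro x hx
    simp only [mem_union, mem_insert, mem_singleton] at hx
    rw [mem_gapsBelow]
    rcases hx with (rfl | rfl) | hxB
    exacts [⟨by omega, h1⟩, ⟨hF2, h2⟩, (hB x hxB).2]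
  have hle := mul_card_add_sum_le (f := gapSumCount S) hsub fun x hx hxB => by
    rw [mem_gapsBelow] at hx
    simp only [mem_union, mem_insert, mem_singleton, not_or] at hxB
    have hx0 : x ≠ 0 := fun h => hx.2 (h ▸ hS.zero_mem)
    exact hcount x hx.1 hx.2 (by omega) hxB.2
  rw [sum_union hdisj, card_union_of_disjoint hdisj, sum_pair (by decide),
    card_pair (by decide)] at hle
  have hcount2 : 1 ≤ gapSumCount S 2 := one_le_gapSumCount_add h1 h1
  have hcard := card_gapsBelow_add_one hF
  omega

theorem two_mul_sgGenus_le_of_multiplicity_four (hS : IsNumericalSemigroup S)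
    (hg : 11 ≤ sgGenus S) (hm : IsLeast (S \ {0}) 4) {F : ℕ} (hF : IsGreatest Sᶜ F) :
    2 * sgGenus S ≤ ∑ x ∈ gapsBelow S F, gapSumCount S x + 5 := by
  have hgF := sgGenus_le_of_isGreatest_compl hS hF
  have h2 : 2 ∉ S := notMem_of_lt_multiplicity hm (by omega) (by omega)
  have h5 := five_notMem_of_four_mem hS hg hm.1.1
  simpa using two_mul_sgGenus_add_sum_le hS h2 hF (by omega) (B := ∅) (by simp)
    fun x hxF _ hx3 _ => two_le_gapSumCount_of_multiplicity_four hS hm h5 hx3 hF.1 hxF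

theorem two_mul_sgGenus_le_of_six_notMem (hS : IsNumericalSemigroup S)
    (hg : 11 ≤ sgGenus S) (hm : IsLeast (S \ {0}) 4) (h6 : 6 ∉ S) {F : ℕ}
    (hF : IsGreatest Sᶜ F) :
    2 * sgGenus S ≤ ∑ x ∈ gapsBelow S F, gapSumCount S x + 4 := by
  have hgF := sgGenus_le_of_isGreatest_compl hS hF
  have hgap : ∀ i, 0 < i → i < 4 → i ∉ S := fun i => notMem_of_lt_multiplicity hm
  have h5 := five_notMem_of_four_mem hS hg hm.1.1
  have hle := two_mul_sgGenus_add_sum_le hS (hgap 2 (by omega) (by omega)) hF (by omega)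
    (B := {6}) (by simpa [h6] using by omega) fun x hxF _ hx3 _ =>
      two_le_gapSumCount_of_multiplicity_four hS hm h5 hx3 hF.1 hxF
  have hcount6 : 3 ≤ gapSumCount S 6 :=
    card_le_gapSumCount (A := {1, 3, 5}) (by simp [hgap, h5])
  rw [sum_singleton, card_singleton] at hle
  omega

theorem six_le_of_Ico_subset (hS : IsNumericalSemigroup S) (hg : 11 ≤ sgGenus S) {m : ℕ}
    (hm5 : 5 ≤ m) (hIco : Set.Ico m (2 * m - 2) ⊆ S) : 6 ≤ m := by
  have hlarge : Set.Ici (2 * m - 1 + 1) ⊆ S := by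
    rw [show 2 * m - 1 + 1 = 2 * m by omega]
    exact Ici_two_mul_subset hS hm5 hIco
  have := sgGenus_le_of_Ici_subset hS hlarge
  omega

theorem two_mul_sgGenus_le_of_five_le_multiplicity (hS : IsNumericalSemigroup S)
    (hg : 11 ≤ sgGenus S) {m : ℕ} (hm : IsLeast (S \ {0}) m) (hm5 : 5 ≤ m) {F : ℕ}
    (hF : IsGreatest Sᶜ F) :
    2 * sgGenus S ≤ ∑ x ∈ gapsBelow S F, gapSumCount S x + 4 := by
  have hgF := sgGenus_le_of_isGreatest_compl hS hF
  have hgap : ∀ i, 0 < i → i < m → i ∉ S := fun i => notMem_of_lt_multiplicity hm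
  have h2 := hgap 2 (by omega) (by omega)
  have h4 := hgap 4 (by omega) (by omega)
  have hcount : ∀ n ≤ m, n - 1 ≤ gapSumCount S n := fun n hn =>
    sub_one_le_gapSumCount fun i hi hin => hgap i hi (by omega)
  have hcount4 := hcount 4 (by omega)
  by_cases hall : ∀ x < F, x ∉ S → 3 ≤ x → 2 ≤ gapSumCount S x
  · have hle := two_mul_sgGenus_add_sum_le hS h2 hF (by omega) (B := {4})
      (by simpa [h4] using by omega) fun x hxF hx hx3 _ => hall x hxF hx hx3
    rw [sum_singleton, card_singleton] at hle
    omega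
  · push Not at hall
    obtain ⟨l, hlF, hlS, hl3, hl⟩ := hall
    have hexc : ∀ x < F, 3 ≤ x → 2 ≤ gapSumCount S x ∨ (x + 2 = 2 * m ∧ Set.Ico m x ⊆ S) :=
      fun x hxF hx3 => two_le_gapSumCount_or hS hm (by omega) hx3 hF.1 hxF
    obtain ⟨hlm, hIco⟩ := (hexc l hlF hl3).resolve_left hl.not_ge
    have hm6 : 6 ≤ m := six_le_of_Ico_subset hS hg hm5 (by rwa [← hlm, Nat.add_sub_cancel])
    have hm1 := hgap (m - 1) (by omega) (by omega)
    have hcountl : 1 ≤ gapSumCount S l := by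
      simpa [show m - 1 + (m - 1) = l by omega] using one_le_gapSumCount_add hm1 hm1
    have hcount5 := hcount 5 (by omega)
    have hle := two_mul_sgGenus_add_sum_le hS h2 hF (by omega) (B := {4, 5, l})
      (by grind) fun x hxF _ hx3 hxB => (hexc x hxF hx3).resolve_right (by grind)
    rw [sum_insert (by grind), sum_pair (by omega), card_insert_of_notMem (by grind),
      card_pair (by omega)] at hle
    omega

theorem exists_mul_add_notMem_iff_lt (hS : IsNumericalSemigroup S) {m : ℕ} (hm : 0 < m)
    (hmS : m ∈ S) (r : ℕ) : ∃ n, ∀ k, m * k + r ∉ S ↔ k < n := by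
  have hup : ∀ k j, m * k + r ∈ S → m * (k + j) + r ∈ S := by
    intro k j hk
    induction j with
    | zero => exact hk
    | succ j ih =>
      rw [show m * (k + (j + 1)) + r = m * (k + j) + r + m by ring]
      exact hS.add_mem ih hmS
  have hex : ∃ k, m * k + r ∈ S := by
    obtain ⟨N, hN⟩ := hS.2.2.bddAbove
    refine ⟨N + 1, not_not.1 fun h => ?_⟩
    have := hN h
    nlinarith
  classical
  refine ⟨Nat.find hex, fun k => ⟨fun hk => ?_, Nat.find_min hex⟩⟩
  by_contra! hle
  rw [← Nat.add_sub_cancel' hle] at hk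
  exact hk (hup _ _ (Nat.find_spec hex))

theorem one_le_gapSumCount_mul_add_two_mul {m n r k : ℕ} (hn : ∀ i < n, m * i + r ∉ S)
    (hkn : k + 2 ≤ 2 * n) : 1 ≤ gapSumCount S (m * k + 2 * r) := by
  have hle := one_le_gapSumCount_add (hn (k / 2) (by omega)) (hn (k - k / 2) (by omega))
  rwa [show m * (k / 2) + r + (m * (k - k / 2) + r) = m * (k / 2 + (k - k / 2)) + 2 * r by ring,
    Nat.add_sub_cancel' (Nat.div_le_self k 2)] at hle

theorem two_le_gapSumCount_mul_add_two_mul {m n r k : ℕ} (hm : 0 < m) (hn : ∀ i < n, m * i + r ∉ S)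
    (hk : 0 < k) (hkn : k + 3 ≤ 2 * n) : 2 ≤ gapSumCount S (m * k + 2 * r) := by
  obtain ⟨i, j, rfl, hi, hj, hij⟩ : ∃ i j, k = i + j ∧ i < n ∧ j < n ∧ i ≠ j :=
    ⟨(k - 1) / 2, k - (k - 1) / 2, by omega, by omega, by omega, by omega⟩
  have hne : m * i + r ≠ m * j + r := fun h =>
    hij (Nat.eq_of_mul_eq_mul_left hm (Nat.add_right_cancel h))
  have hle := two_le_gapSumCount_add (hn i hi) (hn j hj) hne
  rwa [show m * i + r + (m * j + r) = m * (i + j) + 2 * r by ring] at hle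

section MultiplicityThree

variable {p q : ℕ} (hp : ∀ k, 3 * k + 1 ∉ S ↔ k < p) (hq : ∀ k, 3 * k + 2 ∉ S ↔ k < q)

include hp hq

theorem eq_mul_three_add_of_notMem (hS : IsNumericalSemigroup S) (h3 : 3 ∈ S) {x : ℕ}
    (hx : x ∉ S) : (∃ k < p, x = 3 * k + 1) ∨ ∃ k < q, x = 3 * k + 2 := by
  obtain ⟨n, hn⟩ := exists_mul_add_notMem_iff_lt hS (by omega) h3 0
  have hn0 : n = 0 := by
    by_contra h
    exact (hn 0).2 (Nat.pos_of_ne_zero h) hS.zero_mem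
  subst hn0
  obtain h | h | h : x = 3 * (x / 3) + 0 ∨ x = 3 * (x / 3) + 1 ∨ x = 3 * (x / 3) + 2 := by omega
  · exact absurd ((hn _).1 (h ▸ hx)) (Nat.not_lt_zero _)
  · exact Or.inl ⟨x / 3, (hp _).1 (h ▸ hx), h⟩
  · exact Or.inr ⟨x / 3, (hq _).1 (h ▸ hx), h⟩

theorem sgGenus_le_add (hS : IsNumericalSemigroup S) (h3 : 3 ∈ S) : sgGenus S ≤ p + q := by
  calc sgGenus S
      ≤ #((range p).image (3 * · + 1) ∪ (range q).image (3 * · + 2)) :=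
        sgGenus_le_card fun x hx => by
          simp only [mem_union, mem_image, mem_range]
          exact (eq_mul_three_add_of_notMem hp hq hS h3 hx).imp
            (fun ⟨k, hk, h⟩ => ⟨k, hk, h.symm⟩) fun ⟨k, hk, h⟩ => ⟨k, hk, h.symm⟩
    _ ≤ p + q := (card_union_le _ _).trans <| add_le_add
        (card_image_le.trans_eq (card_range p)) (card_image_le.trans_eq (card_range q))

theorem le_two_mul_and_le_two_mul_add_one (hS : IsNumericalSemigroup S) :
    q ≤ 2 * p ∧ p ≤ 2 * q + 1 := by
  have hp' : 3 * p + 1 ∈ S := not_not.1 fun h => lt_irrefl p ((hp p).1 h)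
  have hq' : 3 * q + 2 ∈ S := not_not.1 fun h => lt_irrefl q ((hq q).1 h)
  constructor
  · by_contra! h
    refine (hq (2 * p)).2 h ?_
    rw [show 3 * (2 * p) + 2 = 3 * p + 1 + (3 * p + 1) by ring]
    exact hS.add_mem hp' hp'
  · by_contra! h
    refine (hp (2 * q + 1)).2 h ?_
    rw [show 3 * (2 * q + 1) + 1 = 3 * q + 2 + (3 * q + 2) by ring]
    exact hS.add_mem hq' hq'

theorem three_mul_le_of_isGreatest {F : ℕ} (hF : IsGreatest Sᶜ F) :
    3 * p ≤ F + 2 ∧ 3 * q ≤ F + 1 := by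
  constructor
  · by_contra! h
    have := hF.2 ((hp (p - 1)).2 (by omega))
    omega
  · by_contra! h
    have := hF.2 ((hq (q - 1)).2 (by omega))
    omega

theorem two_le_gapSumCount_of_three_mem (hS : IsNumericalSemigroup S) (h3 : 3 ∈ S) {F x : ℕ}
    (hF : IsGreatest Sᶜ F) (hx : x ∉ S) (hx5 : 5 ≤ x) (hxF : x < F) (hxF3 : x ≠ F - 3) :
    2 ≤ gapSumCount S x := by
  obtain ⟨hqp, hpq⟩ := le_two_mul_and_le_two_mul_add_one hp hq hS
  obtain ⟨hpF, hqF⟩ := three_mul_le_of_isGreatest hp hq hF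
  have hFclass := eq_mul_three_add_of_notMem hp hq hS h3 hF.1
  rcases eq_mul_three_add_of_notMem hp hq hS h3 hx with ⟨k, -, rfl⟩ | ⟨k, -, rfl⟩
  · have hkq : k - 1 + 3 ≤ 2 * q := by rcases hFclass with ⟨f, hf, rfl⟩ | ⟨f, hf, rfl⟩ <;> omega
    have hle := two_le_gapSumCount_mul_add_two_mul (k := k - 1) three_pos (fun i => (hq i).2)
      (by omega) hkq
    rwa [show 3 * (k - 1) + 2 * 2 = 3 * k + 1 by omega] at hle
  · have hkp : k + 3 ≤ 2 * p := by rcases hFclass with ⟨f, hf, rfl⟩ | ⟨f, hf, rfl⟩ <;> omega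
    exact two_le_gapSumCount_mul_add_two_mul (r := 1) three_pos (fun i => (hp i).2) (by omega) hkp

theorem one_le_gapSumCount_sub_three (hS : IsNumericalSemigroup S) (h3 : 3 ∈ S) {F : ℕ}
    (hF : IsGreatest Sᶜ F) (hF5 : 5 ≤ F) : 1 ≤ gapSumCount S (F - 3) := by
  obtain ⟨hqp, hpq⟩ := le_two_mul_and_le_two_mul_add_one hp hq hS
  rcases eq_mul_three_add_of_notMem hp hq hS h3 hF.1 with ⟨k, hk, rfl⟩ | ⟨k, hk, rfl⟩
  · have hle := one_le_gapSumCount_mul_add_two_mul (k := k - 2) (m := 3) (fun i => (hq i).2)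
      (by omega)
    rwa [show 3 * (k - 2) + 2 * 2 = 3 * k + 1 - 3 by omega] at hle
  · have hle := one_le_gapSumCount_mul_add_two_mul (k := k - 1) (m := 3) (fun i => (hp i).2)
      (by omega)
    rwa [show 3 * (k - 1) + 2 * 1 = 3 * k + 2 - 3 by omega] at hle

end MultiplicityThree

theorem two_mul_sgGenus_le_of_multiplicity_three (hS : IsNumericalSemigroup S)
    (hg : 11 ≤ sgGenus S) (hm : IsLeast (S \ {0}) 3) {F : ℕ} (hF : IsGreatest Sᶜ F) :
    2 * sgGenus S ≤ ∑ x ∈ gapsBelow S F, gapSumCount S x + 4 := by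
  have h3 : 3 ∈ S := hm.1.1
  obtain ⟨p, hp⟩ := exists_mul_add_notMem_iff_lt hS (by omega) h3 1
  obtain ⟨q, hq⟩ := exists_mul_add_notMem_iff_lt hS (by omega) h3 2
  have hpq := sgGenus_le_add hp hq hS h3
  obtain ⟨hqp, hpq'⟩ := le_two_mul_and_le_two_mul_add_one hp hq hS
  obtain ⟨hpF, hqF⟩ := three_mul_le_of_isGreatest hp hq hF
  have hgap1 : ∀ k < 4, 3 * k + 1 ∉ S := fun k hk => (hp k).2 (by omega)
  have hgap2 : ∀ k < 4, 3 * k + 2 ∉ S := fun k hk => (hq k).2 (by omega)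
  have hF3 : F - 3 ∉ S := fun h => hF.1 <| by
    simpa [show F - 3 + 3 = F by omega] using hS.add_mem h h3
  have h1 : 1 ∉ S := hgap1 0 (by omega)
  have h4 : 4 ∉ S := hgap1 1 (by omega)
  have h7 : 7 ∉ S := hgap1 2 (by omega)
  have h10 : 10 ∉ S := hgap1 3 (by omega)
  have h2 : 2 ∉ S := hgap2 0 (by omega)
  have h8 : 8 ∉ S := hgap2 2 (by omega)
  have h11 : 11 ∉ S := hgap2 3 (by omega)
  have hcount4 : 1 ≤ gapSumCount S 4 := one_le_gapSumCount_add h2 h2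
  have hcount8 : 3 ≤ gapSumCount S 8 := card_le_gapSumCount (A := {1, 4, 7}) (by simp [*])
  have hcount11 : 4 ≤ gapSumCount S 11 := card_le_gapSumCount (A := {1, 4, 7, 10}) (by simp [*])
  have hcountF := one_le_gapSumCount_sub_three hp hq hS h3 hF (by omega)
  have hle := two_mul_sgGenus_add_sum_le hS h2 hF (by omega) (B := {4, 8, 11, F - 3})
    (by grind) fun x hxF hx hx3 hxB =>
      two_le_gapSumCount_of_three_mem hp hq hS h3 hF hx (by grind) hxF (by grind)
  rw [sum_insert (by grind), sum_insert (by grind), sum_pair (by omega),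
    card_insert_of_notMem (by grind), card_insert_of_notMem (by grind), card_pair (by omega)] at hle
  omega

theorem two_mul_sgGenus_le_of_not_bielliptic (hS : IsNumericalSemigroup S)
    (hg : 11 ≤ sgGenus S) (h2 : 2 ∉ S) {F : ℕ} (hF : IsGreatest Sᶜ F)
    (hbi : ¬ (4 ∈ S ∧ 6 ∈ S ∧ 1 ∉ S ∧ 2 ∉ S ∧ 3 ∉ S ∧ 5 ∉ S)) :
    2 * sgGenus S ≤ ∑ x ∈ gapsBelow S F, gapSumCount S x + 4 := by
  obtain ⟨m, hm⟩ := hS.exists_isLeast_pos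
  have h1 := one_notMem_of_two_notMem hS h2
  have hm0 : m ≠ 0 := hm.1.2
  have hm1 : m ≠ 1 := fun h => h1 (h ▸ hm.1.1)
  have hm2 : m ≠ 2 := fun h => h2 (h ▸ hm.1.1)
  obtain rfl | rfl | hm5 : m = 3 ∨ m = 4 ∨ 5 ≤ m := by omega
  · exact two_mul_sgGenus_le_of_multiplicity_three hS hg hm hF
  · have h3 : 3 ∉ S := notMem_of_lt_multiplicity hm (by omega) (by omega)
    have h5 := five_notMem_of_four_mem hS hg hm.1.1
    exact two_mul_sgGenus_le_of_six_notMem hS hg hm (fun h6 => hbi ⟨hm.1.1, h6, h1, h2, h3, h5⟩) hF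
  · exact two_mul_sgGenus_le_of_five_le_multiplicity hS hg hm hm5 hF

theorem two_mul_sgGenus_le_sum_gapSumCount_add_five (hS : IsNumericalSemigroup S)
    (hg : 11 ≤ sgGenus S) (h2 : 2 ∉ S) {F : ℕ} (hF : IsGreatest Sᶜ F) :
    2 * sgGenus S ≤ ∑ x ∈ gapsBelow S F, gapSumCount S x + 5 := by
  by_cases hbi : 4 ∈ S ∧ 6 ∈ S ∧ 1 ∉ S ∧ 2 ∉ S ∧ 3 ∉ S ∧ 5 ∉ S
  · obtain ⟨h4, -, h1, -, h3, -⟩ := hbi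
    refine two_mul_sgGenus_le_of_multiplicity_four hS hg ⟨⟨h4, four_ne_zero⟩, fun x hx => ?_⟩ hF
    by_contra! hx4
    obtain ⟨hxS, hx0⟩ := hx
    interval_cases x <;> contradiction
  · exact (two_mul_sgGenus_le_of_not_bielliptic hS hg h2 hF hbi).trans (Nat.le_succ _)

theorem sq_sub_five_mul_add_ten_div_two (g : ℕ) :
    ((g : ℤ) ^ 2 - 5 * g + 10) / 2 = (g.choose 2 : ℤ) - 2 * g + 5 := by
  have hchoose : (g.choose 2 : ℤ) * 2 = g * (g - 1) := by
    have h := Nat.cast_choose_two ℚ g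
    rw [eq_div_iff two_ne_zero] at h
    exact_mod_cast h
  rw [show (g : ℤ) ^ 2 - 5 * g + 10 = ((g.choose 2 : ℤ) - 2 * g + 5) * 2 by linarith,
    Int.mul_ediv_cancel _ two_ne_zero]

end

/-- for a numerical semigroup of genus `g ≥ 11` with `2 ∉ S`,
`W_K ≤ (g²−5g+10)/2`; moreover if `S` is not bielliptic then the inequality is strict. -/
theorem weight_Kset_submaximal_bound (S : Set ℕ) (hS : IsNumericalSemigroup S)
    (g : ℕ) (hg : sgGenus S = g) (hgge : 11 ≤ g) (h2 : 2 ∉ S) :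
    sgWeight (Kset S) ≤ ((g : ℤ) ^ 2 - 5 * (g : ℤ) + 10) / 2 ∧
      (¬ (4 ∈ S ∧ 6 ∈ S ∧ 1 ∉ S ∧ 2 ∉ S ∧ 3 ∉ S ∧ 5 ∉ S) →
        sgWeight (Kset S) < ((g : ℤ) ^ 2 - 5 * (g : ℤ) + 10) / 2) := by
  subst hg
  obtain ⟨F, hF⟩ := hS.exists_isGreatest_compl ⟨2, h2⟩
  have hweight := sgWeight_Kset_add_sum_gapSumCount hS hF
  have hbound := two_mul_sgGenus_le_sum_gapSumCount_add_five hS hgge h2 hF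
  rw [sq_sub_five_mul_add_ten_div_two]
  refine ⟨by omega, fun hbi => ?_⟩
  have hstrict := two_mul_sgGenus_le_of_not_bielliptic hS hgge h2 hF hbi
  omega
end

section
/- For every natural number κ there exists a natural number g₀ such that the following holds: if S is a κ-hyperelliptic numerical semigroup of genus g ≥ g₀ with gaps ℓ_1 < … < ℓ_g, and if every odd element of S ∩ {1, …, 2g} is strictly larger than the next-to-largest gap ℓ_{g−1}, then binomial(g−2κ, 2) + 2κ ≤ W_{K(S)} ≤ binomial(g−2κ, 2) + 2κ². -/
/-- The largest gap `ℓ_g` of `S`. -/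
noncomputable def largestGap (S : Set ℕ) : ℕ := sSup (Sᶜ : Set ℕ)

/-- The next-to-largest gap `ℓ_{g−1}` of `S`. -/
noncomputable def secondLargestGap (S : Set ℕ) : ℕ :=
  sSup ((Sᶜ : Set ℕ) \ {largestGap S})

/-!
Let `T` be the set of halves of the even elements of `S`. Being `κ`-hyperelliptic says that `T` has
genus `κ`, so `S` has exactly `κ` even gaps. The hypothesis on the odd elements forces the odd gaps
to be `1, 3, …, 2k - 1` together with the largest gap. Since `W_{K(S)} = W_S + 2g - c` with `c` the
conductor, the largest gap cancels, and what remains is the exact formula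
`W_{K(S)} = binomial(g - 2κ, 2) + 2κ + 2 W_T`.
Finally `0 ≤ W_T ≤ binomial(κ, 2)`, because the `i`-th gap of a semigroup is at least `i` and at
most `2i - 1`.
-/

open Finset

theorem two_mul_cast_choose_two {R : Type*} [CommRing R] (n : ℕ) :
    2 * (n.choose 2 : R) = n * (n - 1) := by
  induction n with
  | zero => simp
  | succ n ih =>
    rw [Nat.choose_succ_succ' n 1, Nat.choose_one_right]
    push_cast
    linear_combination ih

theorem sum_card_filter_le_eq_choose_two {α : Type*} [LinearOrder α] (A : Finset α) :
    ∑ x ∈ A, #{y ∈ A | y ≤ x} = (#A + 1).choose 2 := by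
  induction A using Finset.induction_on_max with
  | empty => simp
  | insert m s hm ih =>
    have hms : m ∉ s := fun h => lt_irrefl _ (hm m h)
    have hrank_max : {y ∈ insert m s | y ≤ m} = insert m s :=
      filter_true_of_mem fun y hy => (mem_insert.1 hy).elim le_of_eq fun h => (hm y h).le
    have hrank (x : α) (hx : x ∈ s) : {y ∈ insert m s | y ≤ x} = {y ∈ s | y ≤ x} := by
      rw [filter_insert, if_neg (hm x hx).not_ge]
    rw [sum_insert hms, hrank_max, sum_congr rfl fun x hx => congrArg card (hrank x hx), ih,
      card_insert_of_notMem hms, Nat.choose_succ_succ' (#s + 1) 1, Nat.choose_one_right]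

theorem sum_range_two_mul_add_one (n : ℕ) : ∑ i ∈ range n, (2 * i + 1) = n ^ 2 := by
  induction n with
  | zero => rfl
  | succ n ih => rw [sum_range_succ, ih]; ring

theorem sum_range_sdiff_reflect {c : ℕ} {G : Finset ℕ} (hG : G ⊆ range c) :
    ∑ s ∈ range c \ G, ((c - 1 - s : ℕ) : ℤ) = c.choose 2 - #G * (c - 1) + ∑ s ∈ G, (s : ℤ) := by
  have htotal : ∑ s ∈ range c, ((c - 1 - s : ℕ) : ℤ) = c.choose 2 := by
    rw [sum_range_reflect (fun i => (i : ℤ)), ← Nat.cast_sum, sum_range_id, Nat.choose_two_right]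
  have hremoved : ∑ s ∈ G, ((c - 1 - s : ℕ) : ℤ) = #G * (c - 1) - ∑ s ∈ G, (s : ℤ) := by
    rw [← nsmul_eq_mul, ← sum_const, ← sum_sub_distrib]
    refine sum_congr rfl fun s hs => ?_
    have := mem_range.1 (hG hs)
    omega
  linarith [sum_sdiff hG (f := fun s => ((c - 1 - s : ℕ) : ℤ))]

section Gaps

variable {S : Set ℕ} {G : Finset ℕ}

theorem exists_finset_mem_iff_notMem (hfin : Sᶜ.Finite) : ∃ G : Finset ℕ, ∀ x, x ∈ G ↔ x ∉ S :=
  ⟨hfin.toFinset, fun _ => hfin.mem_toFinset⟩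

theorem compl_eq_coe_gaps (hG : ∀ x, x ∈ G ↔ x ∉ S) : Sᶜ = (G : Set ℕ) :=
  Set.ext fun x => (hG x).symm

theorem sgGenus_eq_card (hG : ∀ x, x ∈ G ↔ x ∉ S) : sgGenus S = #G := by
  rw [sgGenus, compl_eq_coe_gaps hG, Set.ncard_coe_finset]

theorem sgWeight_eq_sum_sub_choose (hG : ∀ x, x ∈ G ↔ x ∉ S) :
    sgWeight S = ∑ x ∈ G, (x : ℤ) - ((#G + 1).choose 2 : ℤ) := by
  rw [sgWeight, sgGenus_eq_card hG, compl_eq_coe_gaps hG, finsum_mem_coe_finset]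

theorem mem_of_sgConductor_le (hfin : Sᶜ.Finite) {n : ℕ} (hn : sgConductor S ≤ n) : n ∈ S := by
  obtain ⟨b, hb⟩ := hfin.bddAbove
  have hne : {c : ℕ | ∀ n, c ≤ n → n ∈ S}.Nonempty :=
    ⟨b + 1, fun m hm => by_contra fun h => (hb h).not_gt hm⟩
  exact Nat.sInf_mem hne n hn

theorem gaps_subset_range_sgConductor (hG : ∀ x, x ∈ G ↔ x ∉ S) : G ⊆ range (sgConductor S) := by
  have hfin : Sᶜ.Finite := compl_eq_coe_gaps hG ▸ G.finite_toSet
  exact fun x hx =>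
    mem_range.2 (lt_of_not_ge fun h => (hG x).1 hx (mem_of_sgConductor_le hfin h))

theorem sgGenus_le_sgConductor (hfin : Sᶜ.Finite) : sgGenus S ≤ sgConductor S := by
  obtain ⟨G, hG⟩ := exists_finset_mem_iff_notMem hfin
  simpa only [sgGenus_eq_card hG, card_range] using
    card_le_card (gaps_subset_range_sgConductor hG)

theorem isGreatest_largestGap (hfin : Sᶜ.Finite) (hne : Sᶜ.Nonempty) :
    IsGreatest Sᶜ (largestGap S) :=
  ⟨Nat.sSup_mem hne hfin.bddAbove, fun _ hx => le_csSup hfin.bddAbove hx⟩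

theorem sgConductor_eq_largestGap_add_one (hfin : Sᶜ.Finite) (hne : Sᶜ.Nonempty) :
    sgConductor S = largestGap S + 1 := by
  obtain ⟨hmem, hmax⟩ := isGreatest_largestGap hfin hne
  refine le_antisymm (Nat.sInf_le fun n hn => by_contra fun h => (hmax h).not_gt hn) ?_
  exact lt_of_not_ge fun h => hmem (mem_of_sgConductor_le hfin h)

theorem mem_compl_Kset_iff {a : ℕ} :
    a ∈ (Kset S)ᶜ ↔ ∃ s ∈ S, s < sgConductor S ∧ sgConductor S - 1 - s = a := by
  simp only [Kset, Set.mem_compl_iff, Set.mem_ofPred_eq, not_not]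
  refine exists_congr fun s => and_congr_right fun _ => ?_
  omega

theorem sgWeight_Kset_s16 (hfin : Sᶜ.Finite) :
    sgWeight (Kset S) = sgWeight S + 2 * sgGenus S - sgConductor S := by
  obtain ⟨G, hG⟩ := exists_finset_mem_iff_notMem hfin
  set c := sgConductor S with hc
  have hsub : G ⊆ range c := gaps_subset_range_sgConductor hG
  have hinj : Set.InjOn (fun s => c - 1 - s) (range c \ G : Finset ℕ) := by
    intro a ha b hb hab
    simp only [coe_sdiff, coe_range, Set.mem_sdiff, Set.mem_Iio] at ha hb hab
    omega
  have hK (a : ℕ) : a ∈ (range c \ G).image (fun s => c - 1 - s) ↔ a ∉ Kset S := by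
    rw [← Set.mem_compl_iff, mem_compl_Kset_iff, ← hc]
    simp only [mem_image, mem_sdiff, mem_range, hG, not_not]
    tauto
  have hcard : (#(range c \ G) : ℤ) = c - #G := by
    rw [cast_card_sdiff hsub, card_range]
  have hchoose := two_mul_cast_choose_two (R := ℤ) (#(range c \ G) + 1)
  push_cast [hcard] at hchoose
  rw [sgWeight_eq_sum_sub_choose hK, sgWeight_eq_sum_sub_choose hG, sgGenus_eq_card hG,
    sum_image hinj, card_image_of_injOn hinj, sum_range_sdiff_reflect hsub]
  have hchoose_c := two_mul_cast_choose_two (R := ℤ) c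
  have hchoose_g := two_mul_cast_choose_two (R := ℤ) (#G + 1)
  push_cast at hchoose_g
  linarith

theorem sgWeight_nonneg (h0 : 0 ∈ S) (hfin : Sᶜ.Finite) : 0 ≤ sgWeight S := by
  obtain ⟨G, hG⟩ := exists_finset_mem_iff_notMem hfin
  have hrank (x : ℕ) : #{y ∈ G | y ≤ x} ≤ x := by
    have hsub : {y ∈ G | y ≤ x} ⊆ Ioc 0 x := fun y hy => by
      obtain ⟨hyG, hyx⟩ := mem_filter.1 hy
      exact mem_Ioc.2 ⟨Nat.pos_of_ne_zero fun h => (hG y).1 hyG (h ▸ h0), hyx⟩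
    simpa only [Nat.card_Ioc, Nat.sub_zero] using card_le_card hsub
  rw [sgWeight_eq_sum_sub_choose hG, ← sum_card_filter_le_eq_choose_two, sub_nonneg,
    ← Nat.cast_sum, Nat.cast_le]
  exact sum_le_sum fun x _ => hrank x

/-- For every `x ≤ n`, one of `x` and `n - x` is a gap. -/
theorem lt_two_mul_card_gaps_le (hadd : ∀ a ∈ S, ∀ b ∈ S, a + b ∈ S)
    (hG : ∀ x, x ∈ G ↔ x ∉ S) {n : ℕ} (hn : n ∉ S) : n < 2 * #{x ∈ G | x ≤ n} := by
  have hcover : range (n + 1) ⊆ {x ∈ G | x ≤ n} ∪ ({x ∈ G | x ≤ n}).image (n - ·) := by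
    intro x hx
    have hxn : x ≤ n := mem_range_succ_iff.1 hx
    simp only [mem_union, mem_image, mem_filter, hG]
    by_cases hxS : x ∈ S
    · refine Or.inr ⟨n - x, ⟨fun h => hn ?_, n.sub_le x⟩, Nat.sub_sub_self hxn⟩
      simpa only [Nat.add_sub_cancel' hxn] using hadd x hxS (n - x) h
    · exact Or.inl ⟨hxS, hxn⟩
  calc n + 1 = #(range (n + 1)) := (card_range _).symm
    _ ≤ _ := card_le_card hcover
    _ ≤ #{x ∈ G | x ≤ n} + #(({x ∈ G | x ≤ n}).image (n - ·)) := card_union_le _ _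
    _ ≤ 2 * #{x ∈ G | x ≤ n} := by rw [two_mul]; exact Nat.add_le_add_left card_image_le _

theorem lt_two_mul_sgGenus (hadd : ∀ a ∈ S, ∀ b ∈ S, a + b ∈ S) (hfin : Sᶜ.Finite) {n : ℕ}
    (hn : n ∉ S) : n < 2 * sgGenus S := by
  obtain ⟨G, hG⟩ := exists_finset_mem_iff_notMem hfin
  rw [sgGenus_eq_card hG]
  exact (lt_two_mul_card_gaps_le hadd hG hn).trans_le
    (Nat.mul_le_mul_left 2 (card_le_card (filter_subset _ G)))

theorem sgWeight_le_choose_two (hadd : ∀ a ∈ S, ∀ b ∈ S, a + b ∈ S) (hfin : Sᶜ.Finite) :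
    sgWeight S ≤ (sgGenus S).choose 2 := by
  obtain ⟨G, hG⟩ := exists_finset_mem_iff_notMem hfin
  have hsum : ∑ x ∈ G, (x + 1) ≤ 2 * (#G + 1).choose 2 := by
    rw [← sum_card_filter_le_eq_choose_two, mul_sum]
    exact sum_le_sum fun x hx => lt_two_mul_card_gaps_le hadd hG ((hG x).1 hx)
  rw [sum_add_distrib, sum_const, smul_eq_mul, mul_one] at hsum
  rw [sgWeight_eq_sum_sub_choose hG, sgGenus_eq_card hG]
  have hpascal : (#G + 1).choose 2 = #G + (#G).choose 2 := by
    rw [Nat.choose_succ_succ' (#G) 1, Nat.choose_one_right]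
  zify at hsum hpascal
  linarith

theorem IsNumericalSemigroup.mem_of_two_mul_lt (hS : IsNumericalSemigroup S) {κ : ℕ}
    (hcard : (Set.Icc 1 (2 * κ) \ S).ncard = κ) (hmem : 2 * κ + 1 ∈ S) {n : ℕ}
    (hn : 2 * κ < n) : n ∈ S := by
  obtain ⟨h0, hadd, hfin⟩ := hS
  obtain ⟨G, hG⟩ := exists_finset_mem_iff_notMem hfin
  have hsmall : #{x ∈ G | x ≤ 2 * κ} = κ := by
    refine (Set.ncard_coe_finset _).symm.trans (Eq.trans ?_ hcard)
    congr 1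
    ext x
    have hpos : x ∉ S → 1 ≤ x := fun hx => Nat.pos_of_ne_zero fun h => hx (h ▸ h0)
    simp only [coe_filter, Set.mem_ofPred_eq, Set.mem_sdiff, Set.mem_Icc, hG]
    tauto
  induction n using Nat.strong_induction_on with
  | _ n ih =>
    by_contra hnS
    have hsub : {x ∈ G | x ≤ n} ⊆ insert n {x ∈ G | x ≤ 2 * κ} := by
      intro x hx
      obtain ⟨hxG, hxn⟩ := mem_filter.1 hx
      rcases hxn.eq_or_lt with rfl | hlt
      · exact mem_insert_self _ _
      · refine mem_insert_of_mem (mem_filter.2 ⟨hxG, ?_⟩)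
        exact le_of_not_gt fun h => (hG x).1 hxG (ih x hlt h)
    have hle := (card_le_card hsub).trans (card_insert_le _ _)
    have hlt := lt_two_mul_card_gaps_le hadd hG hnS
    obtain rfl : n = 2 * κ + 1 := by omega
    exact hnS hmem

theorem IsNumericalSemigroup.sgGenus_eq_of_ncard_inter_Icc (hS : IsNumericalSemigroup S) {κ : ℕ}
    (hcard : (S ∩ Set.Icc 1 (2 * κ)).ncard = κ) (hmem : 2 * κ + 1 ∈ S) : sgGenus S = κ := by
  have hgaps : (Set.Icc 1 (2 * κ) \ S).ncard = κ := by
    have htotal := Set.ncard_inter_add_ncard_sdiff_eq_ncard (Set.Icc 1 (2 * κ)) S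
    rw [Set.inter_comm, hcard, ← coe_Icc, Set.ncard_coe_finset, Nat.card_Icc, coe_Icc] at htotal
    omega
  have hcompl : Sᶜ = Set.Icc 1 (2 * κ) \ S := by
    ext x
    refine ⟨fun hx => ⟨⟨?_, ?_⟩, hx⟩, fun hx => hx.2⟩
    · exact Nat.pos_of_ne_zero fun h => hx (h ▸ hS.1)
    · exact le_of_not_gt fun h => hx (hS.mem_of_two_mul_lt hgaps hmem h)
  rw [sgGenus, hcompl, hgaps]

end Gaps

/-- The halves of the even elements of `S`, written `S / 2` in the literature. Its gaps, doubled,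
are the even gaps of `S`. -/
def halfSet (S : Set ℕ) : Set ℕ := {n | 2 * n ∈ S}

theorem ncard_halfSet_inter_Icc (S : Set ℕ) (n : ℕ) :
    (halfSet S ∩ Set.Icc 1 n).ncard =
      {m : ℕ | m ∈ S ∧ Even m ∧ 2 ≤ m ∧ m ≤ 2 * n}.ncard := by
  rw [← Set.ncard_image_of_injective _ (mul_right_injective₀ (two_ne_zero (α := ℕ)))]
  congr 1
  ext m
  constructor
  · rintro ⟨x, ⟨hxS, hx⟩, rfl⟩
    exact ⟨hxS, even_two_mul x, by grind⟩
  · rintro ⟨hmS, hm, hle⟩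
    obtain ⟨x, rfl⟩ := hm.two_dvd
    exact ⟨x, ⟨hmS, by grind⟩, rfl⟩

theorem filter_not_odd_gaps {S : Set ℕ} {G H : Finset ℕ} (hG : ∀ x, x ∈ G ↔ x ∉ S)
    (hH : ∀ x, x ∈ H ↔ x ∉ halfSet S) : {x ∈ G | ¬Odd x} = H.image (2 * ·) := by
  ext x
  simp only [mem_filter, mem_image, hG, hH, Nat.not_odd_iff_even]
  constructor
  · rintro ⟨hxS, hx⟩
    obtain ⟨y, rfl⟩ := hx.two_dvd
    exact ⟨y, hxS, rfl⟩
  · rintro ⟨y, hy, rfl⟩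
    exact ⟨hy, even_two_mul y⟩

namespace IsNumericalSemigroup

variable {S : Set ℕ} {G : Finset ℕ}

theorem half (hS : IsNumericalSemigroup S) : IsNumericalSemigroup (halfSet S) := by
  refine ⟨hS.1, fun a ha b hb => ?_, hS.2.2.preimage (mul_right_injective₀ two_ne_zero).injOn⟩
  have := hS.2.1 _ ha _ hb
  rwa [← mul_add] at this

theorem odd_largestGap (hS : IsNumericalSemigroup S)
    (hg : 4 * sgGenus (halfSet S) < sgGenus S) : Odd (largestGap S) := by
  have hne : Sᶜ.Nonempty := Set.nonempty_of_ncard_ne_zero (Nat.ne_zero_of_lt hg)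
  by_contra heven
  obtain ⟨a, ha⟩ := (Nat.not_odd_iff_even.1 heven).two_dvd
  have hgap : a ∉ halfSet S := fun h =>
    (isGreatest_largestGap hS.2.2 hne).1 (ha ▸ h)
  have hlt := lt_two_mul_sgGenus hS.half.2.1 hS.half.2.2 hgap
  have hle := sgGenus_le_sgConductor hS.2.2
  rw [sgConductor_eq_largestGap_add_one hS.2.2 hne] at hle
  omega

theorem secondLargestGap_lt_largestGap (hS : IsNumericalSemigroup S) (hne : Sᶜ.Nonempty) :
    secondLargestGap S < largestGap S := by
  obtain ⟨hmem, hmax⟩ := isGreatest_largestGap hS.2.2 hne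
  have hpos : 0 < largestGap S := Nat.pos_of_ne_zero fun h => hmem (h ▸ hS.1)
  refine Nat.lt_of_le_sub_one hpos (csSup_le' fun x hx => ?_)
  exact Nat.le_sub_one_of_lt (lt_of_le_of_ne (hmax hx.1) hx.2)

theorem odd_notMem_iff_le_secondLargestGap (hS : IsNumericalSemigroup S) (hne : Sᶜ.Nonempty)
    (hsecond : ∀ s ∈ S, Odd s → 1 ≤ s → s ≤ 2 * sgGenus S → secondLargestGap S < s)
    {x : ℕ} (hx : Odd x) (hxf : x ≠ largestGap S) : x ∉ S ↔ x ≤ secondLargestGap S := by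
  refine ⟨fun hxS => ?_, fun hle hxS => ?_⟩
  · exact le_csSup (hS.2.2.subset Set.sdiff_subset).bddAbove ⟨hxS, hxf⟩
  · have hlt := lt_two_mul_sgGenus hS.2.1 hS.2.2 (isGreatest_largestGap hS.2.2 hne).1
    have := hS.secondLargestGap_lt_largestGap hne
    have := hsecond x hxS hx hx.pos (by omega)
    omega

theorem exists_odd_gaps_eq_insert (hS : IsNumericalSemigroup S)
    (hG : ∀ x, x ∈ G ↔ x ∉ S) (hodd : Odd (largestGap S)) (hne : Sᶜ.Nonempty)
    (hsecond : ∀ s ∈ S, Odd s → 1 ≤ s → s ≤ 2 * sgGenus S → secondLargestGap S < s) :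
    ∃ k, largestGap S ∉ (range k).image (2 * · + 1) ∧
      {x ∈ G | Odd x} = insert (largestGap S) ((range k).image (2 * · + 1)) := by
  have hlt := hS.secondLargestGap_lt_largestGap hne
  have hmem (x : ℕ) : x ∈ (range ((secondLargestGap S + 1) / 2)).image (2 * · + 1) ↔
      Odd x ∧ x ≤ secondLargestGap S := by
    simp only [mem_image, mem_range]
    constructor
    · rintro ⟨i, hi, rfl⟩
      exact ⟨odd_two_mul_add_one i, by omega⟩
    · rintro ⟨⟨i, rfl⟩, hi⟩
      exact ⟨i, by omega, rfl⟩
  refine ⟨(secondLargestGap S + 1) / 2, fun h => ((hmem _).1 h).2.not_gt hlt, ?_⟩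
  ext x
  rw [mem_filter, mem_insert, hmem, hG]
  rcases eq_or_ne x (largestGap S) with rfl | hxf
  · simp only [hodd, and_true, true_or, iff_true]
    exact (isGreatest_largestGap hS.2.2 hne).1
  · simp only [hxf, false_or, and_comm (b := Odd x)]
    exact and_congr_right fun hx => hS.odd_notMem_iff_le_secondLargestGap hne hsecond hx hxf

theorem exists_card_odd_gaps_and_sum (hS : IsNumericalSemigroup S)
    (hG : ∀ x, x ∈ G ↔ x ∉ S) (hodd : Odd (largestGap S)) (hne : Sᶜ.Nonempty)
    (hsecond : ∀ s ∈ S, Odd s → 1 ≤ s → s ≤ 2 * sgGenus S → secondLargestGap S < s) :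
    ∃ k, #{x ∈ G | Odd x} = k + 1 ∧ ∑ x ∈ G with Odd x, x = k ^ 2 + largestGap S := by
  obtain ⟨k, hnotMem, heq⟩ := hS.exists_odd_gaps_eq_insert hG hodd hne hsecond
  have hinj : Function.Injective (fun i : ℕ => 2 * i + 1) := fun a b h => by simpa using h
  refine ⟨k, ?_, ?_⟩
  · rw [heq, card_insert_of_notMem hnotMem, card_image_of_injective _ hinj, card_range]
  · rw [heq, sum_insert hnotMem, sum_image hinj.injOn, sum_range_two_mul_add_one, add_comm]

theorem sgWeight_Kset_eq_choose_add_sgWeight_halfSet (hS : IsNumericalSemigroup S)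
    (hg : 4 * sgGenus (halfSet S) < sgGenus S)
    (hsecond : ∀ s ∈ S, Odd s → 1 ≤ s → s ≤ 2 * sgGenus S → secondLargestGap S < s) :
    sgWeight (Kset S) = ((sgGenus S - 2 * sgGenus (halfSet S)).choose 2 : ℤ) +
      2 * sgGenus (halfSet S) + 2 * sgWeight (halfSet S) := by
  have hne : Sᶜ.Nonempty := Set.nonempty_of_ncard_ne_zero (Nat.ne_zero_of_lt hg)
  obtain ⟨G, hG⟩ := exists_finset_mem_iff_notMem hS.2.2
  obtain ⟨H, hH⟩ := exists_finset_mem_iff_notMem hS.half.2.2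
  obtain ⟨k, hcard_odd, hsum_odd⟩ :=
    hS.exists_card_odd_gaps_and_sum hG (hS.odd_largestGap hg) hne hsecond
  have hdouble : Function.Injective (2 * · : ℕ → ℕ) := mul_right_injective₀ two_ne_zero
  have hcard : #G = k + 1 + #H := by
    rw [← card_filter_add_card_filter_not (s := G) Odd, hcard_odd, filter_not_odd_gaps hG hH,
      card_image_of_injective _ hdouble]
  have hsum : ∑ x ∈ G, x = k ^ 2 + largestGap S + 2 * ∑ x ∈ H, x := by
    rw [← sum_filter_add_sum_filter_not G Odd, hsum_odd, filter_not_odd_gaps hG hH,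
      sum_image hdouble.injOn, mul_sum]
  rw [sgWeight_Kset_s16 hS.2.2, sgConductor_eq_largestGap_add_one hS.2.2 hne,
    sgWeight_eq_sum_sub_choose hG, sgWeight_eq_sum_sub_choose hH, sgGenus_eq_card hG,
    sgGenus_eq_card hH]
  rw [sgGenus_eq_card hG, sgGenus_eq_card hH] at hg
  have hchoose_G := two_mul_cast_choose_two (R := ℤ) (#G + 1)
  have hchoose_H := two_mul_cast_choose_two (R := ℤ) (#H + 1)
  have hchoose := two_mul_cast_choose_two (R := ℤ) (#G - 2 * #H)
  rw [Nat.cast_sub (by omega)] at hchoose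
  zify at hcard hsum
  push_cast [hcard] at hchoose_G hchoose_H hchoose ⊢
  linarith

end IsNumericalSemigroup

/-- for every `κ` there is `g₀` such that every `κ`-hyperelliptic
numerical semigroup of genus `g ≥ g₀`, all of whose odd elements in `{1,…,2g}` exceed
the next-to-largest gap `ℓ_{g−1}`, satisfies
`binomial(g−2κ,2) + 2κ ≤ W_{K(S)} ≤ binomial(g−2κ,2) + 2κ²`. -/
theorem kappa_hyperelliptic_weight_bounds (κ : ℕ) :
    ∃ g₀ : ℕ, ∀ S : Set ℕ, IsNumericalSemigroup S → g₀ ≤ sgGenus S →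
      ({n : ℕ | n ∈ S ∧ Even n ∧ 2 ≤ n ∧ n ≤ 4 * κ}).ncard = κ →
      4 * κ + 2 ∈ S →
      (∀ s ∈ S, Odd s → 1 ≤ s → s ≤ 2 * sgGenus S → secondLargestGap S < s) →
      ((sgGenus S - 2 * κ).choose 2 : ℤ) + 2 * (κ : ℤ) ≤ sgWeight (Kset S) ∧
        sgWeight (Kset S) ≤ ((sgGenus S - 2 * κ).choose 2 : ℤ) + 2 * (κ : ℤ) ^ 2 := by
  refine ⟨4 * κ + 1, fun S hS hg heven hmem hsecond => ?_⟩
  have hgenus : sgGenus (halfSet S) = κ := by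
    refine hS.half.sgGenus_eq_of_ncard_inter_Icc ?_ ?_
    · rw [ncard_halfSet_inter_Icc, ← mul_assoc]
      exact heven
    · change 2 * (2 * κ + 1) ∈ S
      rwa [mul_add, ← mul_assoc]
  have hweight := hS.sgWeight_Kset_eq_choose_add_sgWeight_halfSet (by omega) hsecond
  have hnonneg := sgWeight_nonneg hS.half.1 hS.half.2.2
  have hle := sgWeight_le_choose_two hS.half.2.1 hS.half.2.2
  have hchoose := two_mul_cast_choose_two (R := ℤ) κ
  have hself : (κ : ℤ) ≤ κ ^ 2 := by exact_mod_cast Nat.le_self_pow two_ne_zero κ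
  rw [hgenus] at hweight hle
  constructor <;> linarith
end
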